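/- arXiv:2106.10473 — 3 statements merged into one kernel-verified Lean document; each statement's English description precedes it below -/
import Mathlib

section
/- For each fixed participating requester r ∈ R̃, the per-requester improvement function M ↦ I_r(M) = |V(r,τ;G̃(M)) \ V(r,τ;G)| is monotone nondecreasing and submodular in the supplier set M: for all supplier sets A ⊆ B and any supplier u ∉ B, I_r(A) ≤ I_r(B) and I_r(A∪{u}) − I_r(A) ≥ I_r(B∪{u}) − I_r(B). -/
/-- `walkLen E n v u` : there is a directed walk of exactly `n` edges from `v` to `u`. -/
def walkLen {U : Type*} (E : U → U → Prop) : ℕ → U → U → Prop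
  | 0, v, u => v = u
  | n + 1, v, u => ∃ w, E v w ∧ walkLen E n w u

/-- Directed distance from `v` to `u` (`+∞` if `u` is not reachable from `v`). -/
noncomputable def graphDist {U : Type*} (E : U → U → Prop) (v u : U) : ℕ∞ :=
  sInf {n : ℕ∞ | ∃ m : ℕ, (m : ℕ∞) = n ∧ walkLen E m v u}

/-- The `d`-visible set of `u` : all `v` with `D(v,u;G) ≤ d`. -/
noncomputable def visSet {U : Type*} (E : U → U → Prop) (u : U) (d : ℕ) : Set U :=
  {v | graphDist E v u ≤ (d : ℕ∞)}

/-- Edge relation of `G̃(M) = (U, E ∪ (M × R̃))`: the graph obtained from `G` by adding an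
edge from each supplier in `M` to each requester in `R̃`. -/
def newE {U : Type*} (E : U → U → Prop) (Rt M : Finset U) : U → U → Prop :=
  fun a b => E a b ∨ (a ∈ M ∧ b ∈ Rt)

/-- `I_r(M) = |V(r,τ;G̃(M)) \ V(r,τ;G)|`, the improvement of social visibility of
requester `r` when the set of participating suppliers is `M`. -/
noncomputable def improvement {U : Type*} (E : U → U → Prop) (τ : ℕ) (Rt : Finset U)
    (r : U) (M : Finset U) : ℕ :=
  ((visSet (newE E Rt M) r τ) \ (visSet E r τ)).ncard

/-! Every new edge leads from a supplier to a requester, and every such pair is joined. So a walk in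
`G̃(M)` can jump from the start of its first new edge straight to the end of its last one without
becoming longer, and one new edge suffices. Hence the nodes gained by `r` form the union over
`s ∈ M` of sets that do not depend on `M`: the improvement is a coverage function. -/

section Coverage

variable {ι α : Type*}

theorem ncard_union_add_ncard_le {S T X : Set α} (hST : S ⊆ T) (hT : T.Finite) (hX : X.Finite) :
    (T ∪ X).ncard + S.ncard ≤ (S ∪ X).ncard + T.ncard := by
  have hSX : (S ∪ X).Finite := (hT.subset hST).union hX
  calc (T ∪ X).ncard + S.ncard
      ≤ (T ∪ X).ncard + ((S ∪ X) ∩ T).ncard := by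
        gcongr
        · exact hT.inter_of_right _
        · exact Set.subset_inter Set.subset_union_left hST
    _ = ((S ∪ X) ∪ T).ncard + ((S ∪ X) ∩ T).ncard := by
        rw [Set.union_right_comm, Set.union_eq_self_of_subset_left hST]
    _ = (S ∪ X).ncard + T.ncard := Set.ncard_union_add_ncard_inter _ _ hSX hT

theorem ncard_biUnion_mono (f : ι → Set α) {A B : Finset ι} (hAB : A ⊆ B)
    (hf : ∀ i ∈ B, (f i).Finite) : (⋃ i ∈ A, f i).ncard ≤ (⋃ i ∈ B, f i).ncard :=
  Set.ncard_le_ncard (Set.biUnion_subset_biUnion_left hAB) (B.finite_toSet.biUnion hf)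

theorem ncard_biUnion_submodular [DecidableEq ι] (f : ι → Set α) {A B : Finset ι} (hAB : A ⊆ B)
    (u : ι) (hf : ∀ i ∈ B ∪ {u}, (f i).Finite) :
    (⋃ i ∈ B ∪ {u}, f i).ncard + (⋃ i ∈ A, f i).ncard ≤
      (⋃ i ∈ A ∪ {u}, f i).ncard + (⋃ i ∈ B, f i).ncard := by
  simp only [Finset.set_biUnion_union, Finset.set_biUnion_singleton]
  exact ncard_union_add_ncard_le (Set.biUnion_subset_biUnion_left hAB)
    (B.finite_toSet.biUnion fun i hi => hf i (Finset.mem_union_left _ hi))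
    (hf u (Finset.mem_union_right _ (Finset.mem_singleton_self u)))

end Coverage

section Distance

variable {U : Type*} {E F : U → U → Prop} {u v w : U} {m n : ℕ}

theorem walkLen.mono (hEF : E ≤ F) (h : walkLen E n v u) : walkLen F n v u := by
  induction n generalizing v with
  | zero => exact h
  | succ n ih =>
    obtain ⟨w, hvw, hwu⟩ := h
    exact ⟨w, hEF v w hvw, ih hwu⟩

theorem walkLen.append (hvw : walkLen E m v w) (hwu : walkLen E n w u) :
    walkLen E (m + n) v u := by
  induction m generalizing v with
  | zero =>
    obtain rfl : v = w := hvw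
    rwa [Nat.zero_add]
  | succ m ih =>
    obtain ⟨x, hvx, hxw⟩ := hvw
    rw [Nat.succ_add]
    exact ⟨x, hvx, ih hxw⟩

theorem walkLen.graphDist_le (h : walkLen E n v u) : graphDist E v u ≤ n :=
  sInf_le ⟨n, rfl, h⟩

theorem exists_walkLen_eq_graphDist (h : graphDist E v u ≠ ⊤) :
    ∃ n : ℕ, (n : ℕ∞) = graphDist E v u ∧ walkLen E n v u := by
  have hne : {n : ℕ∞ | ∃ m : ℕ, (m : ℕ∞) = n ∧ walkLen E m v u}.Nonempty := by
    refine Set.nonempty_iff_ne_empty.2 fun hempty => h ?_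
    rw [graphDist, hempty, sInf_empty]
  exact csInf_mem hne

theorem graphDist_anti (hEF : E ≤ F) (v u : U) : graphDist F v u ≤ graphDist E v u :=
  sInf_le_sInf fun _ ⟨n, hn, hwalk⟩ => ⟨n, hn, hwalk.mono hEF⟩

theorem graphDist_self (E : U → U → Prop) (v : U) : graphDist E v v = 0 :=
  nonpos_iff_eq_zero.1 (walkLen.graphDist_le (n := 0) rfl)

theorem graphDist_le_one (h : E v u) : graphDist E v u ≤ 1 :=
  walkLen.graphDist_le (n := 1) ⟨u, h, rfl⟩

theorem graphDist_triangle (E : U → U → Prop) (v w u : U) :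
    graphDist E v u ≤ graphDist E v w + graphDist E w u := by
  by_cases hvw : graphDist E v w = ⊤
  · simp [hvw]
  by_cases hwu : graphDist E w u = ⊤
  · simp [hwu]
  obtain ⟨m, hm, hvw_walk⟩ := exists_walkLen_eq_graphDist hvw
  obtain ⟨n, hn, hwu_walk⟩ := exists_walkLen_eq_graphDist hwu
  rw [← hm, ← hn]
  exact_mod_cast (hvw_walk.append hwu_walk).graphDist_le

theorem graphDist_le_graphDist_add_one (h : E v w) (u : U) :
    graphDist E v u ≤ graphDist E w u + 1 := by
  rw [add_comm]
  exact (graphDist_triangle E v w u).trans (add_le_add_left (graphDist_le_one h) _)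

end Distance

section Suppliers

variable {U : Type*} {E : U → U → Prop} {Rt M : Finset U} {v r s x : U} {n : ℕ}

theorem graphDist_newE_le_add (hs : s ∈ M) (hx : x ∈ Rt) (v r : U) :
    graphDist (newE E Rt M) v r ≤ graphDist E v s + 1 + graphDist E x r := by
  have hE : E ≤ newE E Rt M := fun _ _ => Or.inl
  calc graphDist (newE E Rt M) v r
      ≤ graphDist (newE E Rt M) v s + graphDist (newE E Rt M) s r := graphDist_triangle ..
    _ ≤ graphDist (newE E Rt M) v s +
          (graphDist (newE E Rt M) s x + graphDist (newE E Rt M) x r) := by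
        gcongr
        exact graphDist_triangle ..
    _ ≤ graphDist E v s + (1 + graphDist E x r) := by
        gcongr
        · exact graphDist_anti hE v s
        · exact graphDist_le_one (Or.inr ⟨hs, hx⟩)
        · exact graphDist_anti hE x r
    _ = graphDist E v s + 1 + graphDist E x r := (add_assoc ..).symm

theorem walkLen.graphDist_le_or_exists (h : walkLen (newE E Rt M) n v r) :
    graphDist E v r ≤ n ∨
      ∃ s ∈ M, ∃ x ∈ Rt, graphDist E v s + 1 + graphDist E x r ≤ n := by
  induction n generalizing v with
  | zero => exact Or.inl (walkLen.graphDist_le (n := 0) h)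
  | succ n ih =>
    push_cast
    obtain ⟨w, hold | ⟨hv, hw⟩, hwr⟩ := h
    · refine (ih hwr).imp (fun hdist => ?_) fun ⟨s, hs, x, hx, hdist⟩ => ⟨s, hs, x, hx, ?_⟩
      · exact (graphDist_le_graphDist_add_one hold r).trans (by gcongr)
      · calc graphDist E v s + 1 + graphDist E x r
            ≤ graphDist E w s + 1 + 1 + graphDist E x r := by
              gcongr
              exact graphDist_le_graphDist_add_one hold s
          _ = graphDist E w s + 1 + graphDist E x r + 1 := by ring
          _ ≤ n + 1 := by gcongr
    · obtain ⟨x, hx, hdist⟩ : ∃ x ∈ Rt, graphDist E x r ≤ n :=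
        (ih hwr).elim (fun hdist => ⟨w, hw, hdist⟩)
          fun ⟨_, _, x, hx, hdist⟩ => ⟨x, hx, le_add_self.trans hdist⟩
      refine Or.inr ⟨v, hv, x, hx, ?_⟩
      rw [graphDist_self, zero_add, add_comm]
      gcongr

theorem graphDist_newE_le_iff :
    graphDist (newE E Rt M) v r ≤ n ↔
      graphDist E v r ≤ n ∨
        ∃ s ∈ M, ∃ x ∈ Rt, graphDist E v s + 1 + graphDist E x r ≤ n := by
  constructor
  · intro h
    obtain ⟨k, hk, hwalk⟩ :=
      exists_walkLen_eq_graphDist (ne_top_of_le_ne_top (ENat.natCast_ne_top n) h)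
    rw [← hk] at h
    exact hwalk.graphDist_le_or_exists.imp (·.trans h)
      fun ⟨s, hs, x, hx, hdist⟩ => ⟨s, hs, x, hx, hdist.trans h⟩
  · rintro (h | ⟨s, hs, x, hx, h⟩)
    · exact (graphDist_anti (fun _ _ => Or.inl) v r).trans h
    · exact (graphDist_newE_le_add hs hx v r).trans h

/-- The nodes that become visible to `r` through the supplier `s` alone: those outside the
`τ`-visible set of `r` from which a walk to `r` of length at most `τ` follows edges of `G` except
for one step from `s` to a requester. -/
def gainedSet (E : U → U → Prop) (τ : ℕ) (Rt : Finset U) (r s : U) : Set U :=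
  {v | ∃ x ∈ Rt, graphDist E v s + 1 + graphDist E x r ≤ τ} \ visSet E r τ

theorem gainedSet_subset_visSet (E : U → U → Prop) (τ : ℕ) (Rt : Finset U) (r s : U) :
    gainedSet E τ Rt r s ⊆ visSet E s τ := by
  rintro v ⟨⟨x, -, hdist⟩, -⟩
  exact (le_self_add.trans le_self_add).trans hdist

theorem visSet_newE_sdiff_visSet (E : U → U → Prop) (τ : ℕ) (Rt : Finset U) (r : U)
    (M : Finset U) :
    visSet (newE E Rt M) r τ \ visSet E r τ = ⋃ s ∈ M, gainedSet E τ Rt r s := by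
  ext v
  simp only [gainedSet, visSet, Set.mem_sdiff, Set.mem_ofPred_eq, Set.mem_iUnion,
    graphDist_newE_le_iff]
  tauto

theorem improvement_eq_ncard_biUnion (E : U → U → Prop) (τ : ℕ) (Rt : Finset U) (r : U)
    (M : Finset U) : improvement E τ Rt r M = (⋃ s ∈ M, gainedSet E τ Rt r s).ncard :=
  congrArg Set.ncard (visSet_newE_sdiff_visSet E τ Rt r M)

end Suppliers

theorem improvement_monotone_submodular_general
    {U : Type*} [DecidableEq U] (E : U → U → Prop) (τ : ℕ) (Rt : Finset U) (r : U)
    (A B : Finset U) (hAB : A ⊆ B) (u : U) (hfin : ∀ s ∈ B ∪ {u}, (visSet E s τ).Finite) :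
    improvement E τ Rt r A ≤ improvement E τ Rt r B ∧
      (improvement E τ Rt r (A ∪ {u}) : ℤ) - (improvement E τ Rt r A : ℤ) ≥
        (improvement E τ Rt r (B ∪ {u}) : ℤ) - (improvement E τ Rt r B : ℤ) := by
  have hgain : ∀ s ∈ B ∪ {u}, (gainedSet E τ Rt r s).Finite := fun s hs =>
    (hfin s hs).subset (gainedSet_subset_visSet E τ Rt r s)
  simp only [improvement_eq_ncard_biUnion]
  have hmono := ncard_biUnion_mono (gainedSet E τ Rt r) hAB fun s hs =>
    hgain s (Finset.mem_union_left _ hs)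
  have hsubmod := ncard_biUnion_submodular (gainedSet E τ Rt r) hAB u hgain
  exact ⟨hmono, by omega⟩

/-- for each fixed participating requester `r ∈ R̃`, the per-requester
improvement `M ↦ I_r(M)` is monotone nondecreasing and submodular in the supplier set. -/
theorem improvement_monotone_submodular
    {U : Type*} [Fintype U] [DecidableEq U] (E : U → U → Prop)
    (hNoLoop : ∀ u : U, ¬ E u u) (τ : ℕ) (Rt : Finset U) (r : U) (hr : r ∈ Rt)
    (A B : Finset U) (hAB : A ⊆ B) (u : U) (hu : u ∉ B) :
    improvement E τ Rt r A ≤ improvement E τ Rt r B ∧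
      (improvement E τ Rt r (A ∪ {u}) : ℤ) - (improvement E τ Rt r A : ℤ) ≥
        (improvement E τ Rt r (B ∪ {u}) : ℤ) - (improvement E τ Rt r B : ℤ) :=
  improvement_monotone_submodular_general E τ Rt r A B hAB u fun _ _ => Set.toFinite _
end

section
/- Greedy per-step guarantee: let S be a finite ground set, let f be a monotone nondecreasing submodular set function on subsets of S with f(∅) = 0, and let b ∈ ℕ with b ≥ 1. Define the greedy sets M_0 = ∅ and, for t ≥ 1, M_t = M_{t−1} ∪ {u_t} where u_t ∈ S maximizes f(M_{t−1} ∪ {u}) − f(M_{t−1}) over u ∈ S. Then for every t with 1 ≤ t ≤ b, f(M_t) ≥ (1 − (1 − 1/b)^t) · max{ f(M) : M ⊆ S, |M| ≤ b }. -/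
/-!
By submodularity and monotonicity, a competitor `T` of at most `b` elements exceeds the current
greedy set by at most `b` times the best single-element gain. One greedy step therefore closes at
least a `1/b` fraction of the gap to `T`, so the gap decays like `(1 - 1/b) ^ t`.
-/

open Finset

section SetFunction

variable {ι R : Type*}

/-- A set function is submodular if marginal gains diminish: inserting an element into a larger set
gains at most as much as inserting it into a smaller one. -/
def IsSubmodular [DecidableEq ι] [Sub R] [LE R] (f : Finset ι → R) : Prop :=
  ∀ A B : Finset ι, A ⊆ B → ∀ u ∉ B, f (insert u B) - f B ≤ f (insert u A) - f A

/-- `B` arises from `A` by one step of the greedy algorithm for `f`: it inserts an element `u`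
that maximizes `f (insert u A)`, equivalently the marginal gain. Ties are broken arbitrarily, and
`u ∈ A` is allowed. -/
def IsGreedyStep [DecidableEq ι] [LE R] (f : Finset ι → R) (A B : Finset ι) : Prop :=
  ∃ u, B = insert u A ∧ ∀ v, f (insert v A) ≤ f (insert u A)

section OrderedGroup

variable [DecidableEq ι] [AddCommGroup R] [PartialOrder R] [IsOrderedAddMonoid R]
  {f : Finset ι → R}

theorem IsSubmodular.union_sub_le_sum_sdiff (hf : IsSubmodular f) (A T : Finset ι) :
    f (A ∪ T) - f A ≤ ∑ v ∈ T \ A, (f (insert v A) - f A) := by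
  induction T using Finset.induction_on with
  | empty => simp
  | insert v T hvT ih =>
    rw [union_insert]
    by_cases hvA : v ∈ A
    · rwa [insert_eq_of_mem (mem_union_left T hvA), insert_sdiff_of_mem T hvA]
    · have hv : v ∉ A ∪ T := notMem_union.2 ⟨hvA, hvT⟩
      rw [insert_sdiff_of_notMem T hvA, sum_insert fun h => hvT (mem_sdiff.1 h).1]
      calc f (insert v (A ∪ T)) - f A
          = (f (insert v (A ∪ T)) - f (A ∪ T)) + (f (A ∪ T) - f A) :=
            (sub_add_sub_cancel _ _ _).symm
        _ ≤ (f (insert v A) - f A) + ∑ w ∈ T \ A, (f (insert w A) - f A) :=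
            add_le_add (hf A (A ∪ T) subset_union_left v hv) ih

theorem IsSubmodular.sub_le_card_sdiff_nsmul (hf : IsSubmodular f) (hmono : Monotone f)
    {A T : Finset ι} {d : R} (hd : ∀ v ∈ T \ A, f (insert v A) - f A ≤ d) :
    f T - f A ≤ #(T \ A) • d :=
  calc f T - f A ≤ f (A ∪ T) - f A := sub_le_sub_right (hmono subset_union_right) _
    _ ≤ ∑ v ∈ T \ A, (f (insert v A) - f A) := hf.union_sub_le_sum_sdiff A T
    _ ≤ #(T \ A) • d := sum_le_card_nsmul _ _ _ hd

theorem IsGreedyStep.sub_le_nsmul_sub {A B T : Finset ι} {b : ℕ} (h : IsGreedyStep f A B)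
    (hf : IsSubmodular f) (hmono : Monotone f) (hT : #T ≤ b) :
    f T - f A ≤ b • (f B - f A) := by
  obtain ⟨u, rfl, hmax⟩ := h
  have hgain : 0 ≤ f (insert u A) - f A := sub_nonneg.2 (hmono (subset_insert u A))
  calc f T - f A ≤ #(T \ A) • (f (insert u A) - f A) :=
        hf.sub_le_card_sdiff_nsmul hmono fun v _ => sub_le_sub_right (hmax v) _
    _ ≤ b • (f (insert u A) - f A) :=
        nsmul_le_nsmul_left hgain ((card_le_card sdiff_subset).trans hT)

end OrderedGroup

section OrderedField

variable [DecidableEq ι] [Field R] [LinearOrder R] [IsStrictOrderedRing R] {f : Finset ι → R}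

theorem IsGreedyStep.sub_le_mul_sub {A B T : Finset ι} {b : ℕ} (h : IsGreedyStep f A B)
    (hf : IsSubmodular f) (hmono : Monotone f) (hb : 1 ≤ b) (hT : #T ≤ b) :
    f T - f B ≤ (1 - 1 / (b : R)) * (f T - f A) := by
  have hb0 : (0 : R) < b := Nat.cast_pos.2 hb
  have hgain : (f T - f A) / b ≤ f B - f A := by
    rw [div_le_iff₀' hb0, ← nsmul_eq_mul]
    exact h.sub_le_nsmul_sub hf hmono hT
  calc f T - f B = (f T - f A) - (f B - f A) := (sub_sub_sub_cancel_right _ _ _).symm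
    _ ≤ (f T - f A) - (f T - f A) / b := sub_le_sub_left hgain _
    _ = (1 - 1 / (b : R)) * (f T - f A) := by ring

theorem greedy_per_step_guarantee_general (hf : IsSubmodular f) (hmono : Monotone f)
    {b : ℕ} (hb : 1 ≤ b) {M : ℕ → Finset ι} {t : ℕ}
    (hM : ∀ s < t, IsGreedyStep f (M s) (M (s + 1))) {T : Finset ι} (hT : #T ≤ b) :
    f T - f (M t) ≤ (1 - 1 / (b : R)) ^ t * (f T - f (M 0)) := by
  have hratio : 0 ≤ 1 - 1 / (b : R) := Nat.one_sub_one_div_cast_nonneg b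
  induction t with
  | zero => simp
  | succ t ih =>
    have ih := ih fun s hs => hM s (Nat.lt_succ_of_lt hs)
    calc f T - f (M (t + 1)) ≤ (1 - 1 / (b : R)) * (f T - f (M t)) :=
          (hM t t.lt_succ_self).sub_le_mul_sub hf hmono hb hT
      _ ≤ (1 - 1 / (b : R)) * ((1 - 1 / (b : R)) ^ t * (f T - f (M 0))) :=
          mul_le_mul_of_nonneg_left ih hratio
      _ = (1 - 1 / (b : R)) ^ (t + 1) * (f T - f (M 0)) := by rw [pow_succ', mul_assoc]

end OrderedField

theorem exists_card_le_sSup_eq [Finite ι] [ConditionallyCompleteLinearOrder R]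
    (f : Finset ι → R) (b : ℕ) :
    ∃ T : Finset ι, #T ≤ b ∧ sSup {x | ∃ T : Finset ι, #T ≤ b ∧ x = f T} = f T := by
  have hfinite : {x | ∃ T : Finset ι, #T ≤ b ∧ x = f T}.Finite :=
    (Set.finite_range f).subset fun _ ⟨T, _, hx⟩ => ⟨T, hx.symm⟩
  have hnonempty : {x | ∃ T : Finset ι, #T ≤ b ∧ x = f T}.Nonempty :=
    ⟨f ∅, ∅, b.zero_le, rfl⟩
  exact hnonempty.csSup_mem hfinite

end SetFunction

/-- greedy per-step guarantee: after `t` greedy steps (`1 ≤ t ≤ b`), the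
greedy set achieves at least a `(1 - (1 - 1/b)^t)` fraction of the optimum under the
cardinality constraint `b`.  The ground set is the finite type `ι`. -/
theorem greedy_per_step_guarantee
    {ι : Type*} [DecidableEq ι] [Fintype ι] [Nonempty ι]
    (f : Finset ι → ℝ)
    (hempty : f ∅ = 0)
    (hmono : ∀ A B : Finset ι, A ⊆ B → f A ≤ f B)
    (hsub : ∀ A B : Finset ι, A ⊆ B → ∀ u : ι, u ∉ B →
      f (insert u A) - f A ≥ f (insert u B) - f B)
    (b : ℕ) (hb : 1 ≤ b)
    (M : ℕ → Finset ι) (u : ℕ → ι)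
    (hM0 : M 0 = ∅)
    (hgreedy : ∀ t : ℕ, 1 ≤ t →
      M t = insert (u t) (M (t - 1)) ∧
        ∀ v : ι, f (insert v (M (t - 1))) ≤ f (insert (u t) (M (t - 1)))) :
    ∀ t : ℕ, 1 ≤ t → t ≤ b →
      f (M t) ≥ (1 - (1 - 1 / (b : ℝ)) ^ t) *
        sSup {x : ℝ | ∃ T : Finset ι, T.card ≤ b ∧ x = f T} := by
  intro t _ _
  obtain ⟨T, hT, hsup⟩ := exists_card_le_sSup_eq f b
  have hgap : f T - f (M t) ≤ (1 - 1 / (b : ℝ)) ^ t * (f T - f (M 0)) :=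
    greedy_per_step_guarantee_general hsub hmono hb
      (fun s _ => ⟨u (s + 1), hgreedy (s + 1) s.succ_pos⟩) hT
  rw [hM0, hempty] at hgap
  rw [hsup]
  linarith
end

section
/- Sample complexity of the Shapley value estimator: under the same setting (marginal contributions X(σ) ∈ [0,c] for all orderings σ, and φ̂_u the average of X over K independent uniformly random orderings), for every accuracy t > 0 and confidence δ ∈ (0,1], if K ≥ (c²/(2t²)) · ln(2/δ), then with probability at least 1 − δ, | φ̂_u − φ_u(v) | ≤ t. In particular, the approximation error can be made arbitrarily small by choosing K sufficiently large. -/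
/-- `predsIn σ u` : the set of players that precede `u` in the ordering `σ` of the
players, where an ordering of the `n` players is a bijection `Fin n ≃ ι`. -/
def predsIn {ι : Type*} [Fintype ι] [DecidableEq ι] {n : ℕ} (σ : Fin n ≃ ι) (u : ι) :
    Finset ι :=
  Finset.univ.filter (fun w => σ.symm w < σ.symm u)

/-- The marginal contribution of `u` in the ordering `σ`:
`X(σ) = v(P_σ(u) ∪ {u}) − v(P_σ(u))`. -/
def marginal {ι : Type*} [Fintype ι] [DecidableEq ι] {n : ℕ}
    (v : Finset ι → ℝ) (u : ι) (σ : Fin n ≃ ι) : ℝ :=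
  v (insert u (predsIn σ u)) - v (predsIn σ u)

/-- The Shapley value of player `u`:
`φ_u(v) = Σ_{S ⊆ N\{u}} (|S|!·(n−|S|−1)!/n!)·(v(S∪{u}) − v(S))` with `n = |N|`. -/
noncomputable def shapleyValue {ι : Type*} [Fintype ι] [DecidableEq ι]
    (v : Finset ι → ℝ) (u : ι) : ℝ :=
  ∑ S ∈ (Finset.univ.erase u).powerset,
    ((S.card.factorial : ℝ) * ((Fintype.card ι - S.card - 1).factorial : ℝ) /
        ((Fintype.card ι).factorial : ℝ)) *
      (v (insert u S) - v S)

/-!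
In a uniformly random ordering, `u` is preceded by exactly the players of `S` with probability
`|S|! (n - |S| - 1)! / n!`: the players of `S` are ordered arbitrarily, then comes `u`, then the
remaining players in any order. So the Shapley value is the mean of the marginal contribution, and
its estimator is the mean of `K` independent samples from a bounded interval, to which Hoeffding's
inequality applies. The bound on `K` is what makes the two-sided Hoeffding tail at most `δ`.
-/

section Hoeffding

open MeasureTheory ProbabilityTheory
open scoped NNReal

variable {Ω : Type*} [MeasurableSpace Ω] {μ : Measure Ω}

lemma measureReal_le_abs_le_of_hasSubgaussianMGF {X : Ω → ℝ} {c : ℝ≥0}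
    (hX : HasSubgaussianMGF X c μ) {ε : ℝ} (hε : 0 ≤ ε) :
    μ.real {ω | ε ≤ |X ω|} ≤ 2 * Real.exp (-ε ^ 2 / (2 * c)) := by
  have hunion : {ω | ε ≤ |X ω|} = {ω | ε ≤ X ω} ∪ {ω | ε ≤ (-X) ω} :=
    Set.ext fun ω ↦ le_abs (a := ε) (b := X ω)
  rw [hunion, two_mul]
  exact (measureReal_union_le _ _).trans
    (add_le_add (hX.measure_ge_le hε) (hX.neg.measure_ge_le hε))

variable [IsProbabilityMeasure μ] {κ : Type*} [Fintype κ] {X : κ → Ω → ℝ} {a b t δ : ℝ}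

-- For `a = b` the bound degenerates to the trivial `2`, because `x / 0 = 0`.
theorem measureReal_le_abs_sum_sub_integral_le (hindep : iIndepFun X μ)
    (hmeas : ∀ k, AEMeasurable (X k) μ) (hX : ∀ k, ∀ᵐ ω ∂μ, X k ω ∈ Set.Icc a b) (ht : 0 ≤ t) :
    μ.real {ω | Fintype.card κ * t ≤ |∑ k, (X k ω - μ[X k])|} ≤
      2 * Real.exp (-(2 * Fintype.card κ * t ^ 2 / (b - a) ^ 2)) := by
  have hcentered : iIndepFun (fun k ω ↦ X k ω - μ[X k]) μ :=
    hindep.comp (fun k x ↦ x - ∫ ω, X k ω ∂μ) fun _ ↦ measurable_id.sub_const _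
  have hsubG : HasSubgaussianMGF (fun ω ↦ ∑ k, (X k ω - μ[X k]))
      (∑ _k : κ, (‖b - a‖₊ / 2) ^ 2) μ :=
    HasSubgaussianMGF.sum_of_iIndepFun hcentered fun k _ ↦
      hasSubgaussianMGF_of_mem_Icc (hmeas k) (hX k)
  refine (measureReal_le_abs_le_of_hasSubgaussianMGF hsubG (by positivity)).trans_eq ?_
  congr 2
  simp only [Finset.sum_const, Finset.card_univ, nsmul_eq_mul, NNReal.coe_mul, NNReal.coe_natCast,
    NNReal.coe_pow, NNReal.coe_div, coe_nnnorm, Real.norm_eq_abs, NNReal.coe_ofNat, div_pow, sq_abs]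
  rcases eq_or_ne (Fintype.card κ : ℝ) 0 with hK | hK
  · simp [hK]
  · field_simp

lemma two_mul_exp_neg_le_of_mul_log_le {K L : ℝ} (hL : L ≠ 0) (ht : t ≠ 0) (hδ : 0 < δ)
    (hK : L ^ 2 / (2 * t ^ 2) * Real.log (2 / δ) ≤ K) :
    2 * Real.exp (-(2 * K * t ^ 2 / L ^ 2)) ≤ δ := by
  have hlog : Real.log (2 / δ) ≤ 2 * K * t ^ 2 / L ^ 2 := by
    calc Real.log (2 / δ)
        = 2 * (L ^ 2 / (2 * t ^ 2) * Real.log (2 / δ)) * t ^ 2 / L ^ 2 := by field_simp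
      _ ≤ 2 * K * t ^ 2 / L ^ 2 := by gcongr
  calc 2 * Real.exp (-(2 * K * t ^ 2 / L ^ 2))
      ≤ 2 * Real.exp (-Real.log (2 / δ)) := by gcongr
    _ = δ := by
        rw [Real.exp_neg, Real.exp_log (by positivity), inv_div, mul_div_cancel₀ _ two_ne_zero]

theorem one_sub_le_measureReal_abs_mean_sub_le (hindep : iIndepFun X μ)
    (hmeas : ∀ k, AEMeasurable (X k) μ) (hX : ∀ k, ∀ᵐ ω ∂μ, X k ω ∈ Set.Icc a b) {m : ℝ}
    (hmean : ∀ k, μ[X k] = m) (hab : a < b) (ht : 0 < t) (hδ : δ ∈ Set.Ioc 0 1)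
    (hK : (b - a) ^ 2 / (2 * t ^ 2) * Real.log (2 / δ) ≤ Fintype.card κ) :
    1 - δ ≤ μ.real {ω | |1 / (Fintype.card κ : ℝ) * ∑ k, X k ω - m| ≤ t} := by
  have hba : 0 < b - a := sub_pos.2 hab
  have hlog : 0 < Real.log (2 / δ) := Real.log_pos ((one_lt_div hδ.1).2 (by linarith [hδ.2]))
  have hcard : (0 : ℝ) < Fintype.card κ := lt_of_lt_of_le (by positivity) hK
  have hcover : Set.univ ⊆ {ω | |1 / (Fintype.card κ : ℝ) * ∑ k, X k ω - m| ≤ t} ∪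
      {ω | Fintype.card κ * t ≤ |∑ k, (X k ω - μ[X k])|} := by
    intro ω _
    have hdev : ∑ k, (X k ω - μ[X k]) =
        Fintype.card κ * (1 / (Fintype.card κ : ℝ) * ∑ k, X k ω - m) := by
      simp only [hmean, Finset.sum_sub_distrib, Finset.sum_const, Finset.card_univ, nsmul_eq_mul]
      field_simp
    simp only [Set.mem_union, Set.mem_ofPred_eq, hdev, abs_mul, Nat.abs_cast,
      mul_le_mul_iff_right₀ hcard]
    exact le_total _ _
  have hsplit := (measureReal_mono (μ := μ) hcover).trans (measureReal_union_le _ _)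
  have htail := (measureReal_le_abs_sum_sub_integral_le hindep hmeas hX ht.le).trans
    (two_mul_exp_neg_le_of_mul_log_le hba.ne' ht.ne' hδ.1 hK)
  rw [probReal_univ] at hsplit
  linarith

end Hoeffding

section Uniform

open MeasureTheory ProbabilityTheory
open scoped BigOperators

variable {Ω : Type*} [Fintype Ω]

lemma measureReal_uniformOn_univ [MeasurableSpace Ω] [MeasurableSingletonClass Ω] (s : Set Ω) :
    (uniformOn Set.univ).real s = s.ncard / Fintype.card Ω := by
  rw [Measure.real, uniformOn_univ, Measure.count_apply s.toFinite.measurableSet,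
    ENNReal.toReal_div, ← s.toFinite.cast_ncard_eq, ENat.toENNReal_coe,
    ENNReal.toReal_natCast, ENNReal.toReal_natCast]

lemma integral_uniformOn_univ [MeasurableSpace Ω] [MeasurableSingletonClass Ω] (f : Ω → ℝ) :
    ∫ x, f x ∂uniformOn Set.univ = 𝔼 x, f x := by
  rw [integral_fintype .of_finite, Fintype.expect_eq_sum_div_card, Finset.sum_div]
  simp [measureReal_uniformOn_univ, div_eq_inv_mul]

theorem one_sub_mul_card_le_ncard_abs_mean_sub_expect_le [Nonempty Ω] {κ : Type*} [Fintype κ]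
    [DecidableEq κ] {f : Ω → ℝ} {a b t δ : ℝ} (hf : ∀ x, f x ∈ Set.Icc a b) (hab : a < b)
    (ht : 0 < t) (hδ : δ ∈ Set.Ioc 0 1)
    (hK : (b - a) ^ 2 / (2 * t ^ 2) * Real.log (2 / δ) ≤ Fintype.card κ) :
    (1 - δ) * Fintype.card (κ → Ω) ≤
      {ω : κ → Ω | |1 / (Fintype.card κ : ℝ) * ∑ k, f (ω k) - 𝔼 x, f x| ≤ t}.ncard := by
  let _ : MeasurableSpace Ω := ⊤
  have : MeasurableSingletonClass Ω := ⟨fun _ ↦ trivial⟩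
  have hmeas : AEMeasurable f (uniformOn Set.univ) := (measurable_of_finite f).aemeasurable
  have hmean (k : κ) : ∫ ω, f (ω k) ∂Measure.pi (fun _ : κ ↦ uniformOn (Set.univ : Set Ω)) =
      𝔼 x, f x := by
    rw [integral_comp_eval hmeas.aestronglyMeasurable, integral_uniformOn_univ]
  have hprob := one_sub_le_measureReal_abs_mean_sub_le
    (iIndepFun_pi (X := fun (_ : κ) ↦ f) fun _ ↦ hmeas)
    (fun _ ↦ (measurable_of_finite _).aemeasurable) (fun k ↦ .of_forall fun ω ↦ hf (ω k)) hmean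
    hab ht hδ hK
  rwa [← uniformOn_pi, Set.pi_univ, measureReal_uniformOn_univ,
    le_div_iff₀ (Nat.cast_pos.2 Fintype.card_pos)] at hprob

end Uniform

section Orderings

open scoped BigOperators Finset Nat

variable {ι : Type*} [Fintype ι]

lemma isPrefix_singleton_iff {f : Numbering ι} {u : ι} :
    Numbering.IsPrefix f {u} ↔ (f u : ℕ) = 0 := by
  simp only [Numbering.IsPrefix, Finset.mem_singleton, Finset.card_singleton, Nat.lt_one_iff]
  refine ⟨fun h ↦ (h u).1 rfl, fun h w ↦ ⟨fun hw ↦ hw ▸ h, fun hw ↦ ?_⟩⟩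
  exact f.injective (Fin.ext (hw.trans h.symm))

variable [DecidableEq ι]

lemma card_filter_prefixed_apply_eq_card {s : Finset ι} {u : ι} (hu : u ∉ s) :
    #{f ∈ Numbering.prefixed s | (f u : ℕ) = #s} = (#s)! * (Fintype.card ι - #s - 1)! := by
  -- Right after the prefix `s` comes the element that is first in the induced numbering of `sᶜ`.
  let u' : ↥sᶜ := ⟨u, Finset.mem_compl.2 hu⟩
  have hfirst (f : Numbering.prefixed s) :
      (f.1 u : ℕ) = #s ↔ (Numbering.prefixedEquiv s f).2 ∈ Numbering.prefixed {u'} := by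
    have hle : #s ≤ f.1 u := not_lt.1 (mt (Numbering.mem_prefixed.1 f.2 u).2 hu)
    have hval : ((Numbering.prefixedEquiv s f).2 u' : ℕ) = f.1 u - #s := rfl
    rw [Numbering.mem_prefixed, isPrefix_singleton_iff, hval]
    omega
  calc #{f ∈ Numbering.prefixed s | (f u : ℕ) = #s}
      = Fintype.card {f : Numbering.prefixed s // (f.1 u : ℕ) = #s} := by
        rw [Fintype.card_subtype, Finset.univ_eq_attach,
          Finset.filter_attach fun f : Numbering ι ↦ (f u : ℕ) = #s, Finset.card_map,
          Finset.card_attach]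
    _ = Fintype.card {p : Numbering s × Numbering ↥sᶜ // p.2 ∈ Numbering.prefixed {u'}} :=
        Fintype.card_congr ((Numbering.prefixedEquiv s).subtypeEquiv hfirst)
    _ = #((Finset.univ : Finset (Numbering s)) ×ˢ Numbering.prefixed {u'}) :=
        Fintype.card_of_subtype _ fun p ↦ by simp
    _ = (#s)! * (Fintype.card ι - #s - 1)! := by
        rw [Finset.card_product, Numbering.card_prefixed, Finset.card_univ, Fintype.card_numbering]
        simp

variable {n : ℕ}

lemma card_predsIn (σ : Fin n ≃ ι) (u : ι) : #(predsIn σ u) = σ.symm u := by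
  have hmap : predsIn σ u = (Finset.Iio (σ.symm u)).map σ.toEmbedding := by
    ext w
    simp [predsIn, Finset.mem_map_equiv]
  rw [hmap, Finset.card_map, Fin.card_Iio]

lemma predsIn_eq_iff {σ : Fin (Fintype.card ι) ≃ ι} {u : ι} {S : Finset ι} :
    predsIn σ u = S ↔ Numbering.IsPrefix σ.symm S ∧ (σ.symm u : ℕ) = #S := by
  constructor
  · rintro rfl
    refine ⟨fun w ↦ ?_, (card_predsIn σ u).symm⟩
    rw [card_predsIn, predsIn, Finset.mem_filter_univ, Fin.lt_def]
  · rintro ⟨hprefix, hu⟩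
    ext w
    simp [predsIn, hprefix w, ← hu]

lemma card_filter_predsIn_eq (hn : n = Fintype.card ι) {u : ι} {S : Finset ι} (hu : u ∉ S) :
    #{σ : Fin n ≃ ι | predsIn σ u = S} = (#S)! * (n - #S - 1)! := by
  subst hn
  rw [← card_filter_prefixed_apply_eq_card hu]
  exact Finset.card_equiv (Equiv.symmEquiv _ _) fun σ ↦ by
    simp [predsIn_eq_iff, Equiv.symmEquiv]

theorem expect_marginal_eq_shapleyValue (hn : n = Fintype.card ι) (v : Finset ι → ℝ) (u : ι) :
    𝔼 σ : Fin n ≃ ι, marginal v u σ = shapleyValue v u := by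
  have hcard : Fintype.card (Fin n ≃ ι) = n ! := by
    rw [Fintype.card_equiv (Fintype.equivOfCardEq (by simpa using hn)), Fintype.card_fin]
  have hmaps : ∀ σ ∈ (Finset.univ : Finset (Fin n ≃ ι)),
      predsIn σ u ∈ (Finset.univ.erase u).powerset := by
    intro σ _
    simp [Finset.subset_erase, predsIn]
  rw [Fintype.expect_eq_sum_div_card, hcard, shapleyValue]
  simp only [marginal]
  rw [← Finset.sum_fiberwise_of_maps_to' hmaps fun S ↦ v (insert u S) - v S, Finset.sum_div]
  refine Finset.sum_congr rfl fun S hS ↦ ?_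
  have hu : u ∉ S := (Finset.subset_erase.1 (Finset.mem_powerset.1 hS)).2
  rw [Finset.sum_const, card_filter_predsIn_eq hn hu, nsmul_eq_mul, ← hn, Nat.cast_mul,
    mul_div_right_comm]

end Orderings

theorem shapley_sampling_sample_complexity_general
    {ι : Type*} [Fintype ι] [DecidableEq ι] {n : ℕ} (hn : n = Fintype.card ι)
    {v : Finset ι → ℝ} {u : ι} {a b : ℝ} (hab : a < b)
    (hX : ∀ σ : Fin n ≃ ι, marginal v u σ ∈ Set.Icc a b)
    {t : ℝ} (ht : 0 < t) {δ : ℝ} (hδ : δ ∈ Set.Ioc (0 : ℝ) 1)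
    {K : ℕ} (hK : (b - a) ^ 2 / (2 * t ^ 2) * Real.log (2 / δ) ≤ K) :
    (1 - δ) * Fintype.card (Fin K → (Fin n ≃ ι)) ≤
      {ω : Fin K → (Fin n ≃ ι) |
        |1 / (K : ℝ) * (∑ k, marginal v u (ω k)) - shapleyValue v u| ≤ t}.ncard := by
  have : Nonempty (Fin n ≃ ι) := ⟨Fintype.equivOfCardEq (by simpa using hn)⟩
  simpa only [Fintype.card_fin, expect_marginal_eq_shapleyValue hn] using
    one_sub_mul_card_le_ncard_abs_mean_sub_expect_le (κ := Fin K) hX hab ht hδ (by simpa using hK)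

/-- sample complexity of the Shapley value estimator: if all marginal
contributions lie in `[0,c]` and `K ≥ (c²/(2t²))·ln(2/δ)`, then with probability at
least `1 − δ` (under the uniform distribution on `K`-tuples of orderings, modelled by
counting), the average of the marginal contribution over the `K` sampled orderings is
within `t` of the Shapley value `φ_u(v)`. -/
theorem shapley_sampling_sample_complexity
    {ι : Type*} [Fintype ι] [DecidableEq ι]
    (n : ℕ) (hn : n = Fintype.card ι) (hn1 : 1 ≤ n)
    (v : Finset ι → ℝ) (u : ι) (c : ℝ) (hc : 0 < c)
    (hX : ∀ σ : Fin n ≃ ι, 0 ≤ marginal v u σ ∧ marginal v u σ ≤ c)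
    (t : ℝ) (ht : 0 < t) (δ : ℝ) (hδ : δ ∈ Set.Ioc (0 : ℝ) 1)
    (K : ℕ) (hK : (K : ℝ) ≥ (c ^ 2 / (2 * t ^ 2)) * Real.log (2 / δ)) :
    (({ω : Fin K → (Fin n ≃ ι) |
        |(1 / (K : ℝ)) * (∑ k : Fin K, marginal v u (ω k)) - shapleyValue v u| ≤ t} :
          Set _).ncard : ℝ)
      ≥ (1 - δ) * (Fintype.card (Fin K → (Fin n ≃ ι)) : ℝ) :=
  shapley_sampling_sample_complexity_general hn hc hX ht hδ (by simpa using hK)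
end
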